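/- Let p ∈ P^log(ℝ^n), i.e. p is a measurable function on ℝ^n with 0 < p^- ≤ p(x) ≤ p^+ ≤ ∞ whose reciprocal 1/p is globally log-Hölder continuous, and write 1/p_∞ for the limit value of 1/p at infinity. Then there are constants (independent of x_0, r, x) such that for all x_0 ∈ ℝ^n and all r > 0 one has the equivalences ‖χ_{B_r(x_0)}‖_{L^{p(·)}(ℝ^n)} ≈ ‖χ_{Q_r(x_0)}‖_{L^{p(·)}(ℝ^n)} ≈ r^{n/p(x)} whenever r ≤ 1 and x ∈ B_r(x_0), and ‖χ_{B_r(x_0)}‖_{L^{p(·)}(ℝ^n)} ≈ ‖χ_{Q_r(x_0)}‖_{L^{p(·)}(ℝ^n)} ≈ r^{n/p_∞} whenever r ≥ 1. -/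

import Mathlib

open MeasureTheory ENNReal Real
open scoped FourierTransform

noncomputable section

/-- Euclidean space `ℝ^n`. -/
abbrev Rn (n : ℕ) : Type := EuclideanSpace ℝ (Fin n)

variable {n : ℕ}

/-- The function `φ_t(s)` used in the semimodular of variable exponent Lebesgue spaces:
`φ_t(s) = s^t` for `t < ∞`, while `φ_∞(s) = 0` for `s ≤ 1` and `= ∞` for `s > 1`. -/
def phiVE (t : ℝ≥0∞) (s : ℝ≥0∞) : ℝ≥0∞ :=
  if t = ∞ then (if s ≤ 1 then 0 else ∞) else s ^ t.toReal

/-- The semimodular `ρ_p` of variable exponent Lebesgue spaces. -/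
def modularVE (p : Rn n → ℝ≥0∞) (g : Rn n → ℝ≥0∞) : ℝ≥0∞ :=
  ∫⁻ x, phiVE (p x) (g x)

/-- The variable exponent Lebesgue quasi-norm `‖·‖_{L^{p(·)}(ℝ^n)}`, applied to the
(pointwise) absolute value of a function, i.e. to `[0,∞]`-valued functions.
(For `p⁻ ≥ 1` this is the usual Luxemburg norm; for general `p` it agrees with the
definition via `‖f‖ = ‖|f|^t‖_{L^{p/t}}^{1/t}`.) -/
def vLpNorm (p : Rn n → ℝ≥0∞) (g : Rn n → ℝ≥0∞) : ℝ≥0∞ :=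
  sInf {lam : ℝ≥0∞ | modularVE p (fun x => g x / lam) ≤ 1}

/-- A variable exponent: a measurable function `p : ℝ^n → (0,∞]` with `p⁻ = ess inf p > 0`. -/
def IsVarExp (p : Rn n → ℝ≥0∞) : Prop :=
  Measurable p ∧ (∀ x, 0 < p x) ∧ 0 < essInf p (volume : Measure (Rn n))

/-- Local log-Hölder continuity of `g : ℝ^n → ℝ`. -/
def LocLogHolder (g : Rn n → ℝ) : Prop :=
  ∃ c > 0, ∀ x y : Rn n, |g x - g y| ≤ c / Real.log (Real.exp 1 + (dist x y)⁻¹)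

/-- Log-Hölder decay of `g` at infinity, with limit value `gInf` and constant `c`. -/
def LogDecay (g : Rn n → ℝ) (gInf c : ℝ) : Prop :=
  ∀ x : Rn n, |g x - gInf| ≤ c / Real.log (Real.exp 1 + ‖x‖)

/-- `p ∈ P^log(ℝ^n)`, with prescribed limit value `pinvInf = 1/p_∞` of `1/p` at infinity. -/
def IsPLogWith (p : Rn n → ℝ≥0∞) (pinvInf : ℝ) : Prop :=
  IsVarExp p ∧ LocLogHolder (fun x => (p x)⁻¹.toReal) ∧
    ∃ c > 0, LogDecay (fun x => (p x)⁻¹.toReal) pinvInf c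

/-- `p ∈ P^log(ℝ^n)`. -/
def IsPLog (p : Rn n → ℝ≥0∞) : Prop := ∃ pinvInf : ℝ, IsPLogWith p pinvInf

/-- The Morrey quasi-norm `‖·‖_{M^{u(·)}_{p(·)}(ℝ^n)}` of a `[0,∞]`-valued function:
`sup_{x, r>0} r^{n(1/u(x) - 1/p(x))} ‖f‖_{L^{p(·)}(B_r(x))}`. -/
def morreyNorm (p u : Rn n → ℝ≥0∞) (g : Rn n → ℝ≥0∞) : ℝ≥0∞ :=
  ⨆ (x : Rn n) (r : ℝ) (_ : 0 < r),
    ENNReal.ofReal (r ^ ((n : ℝ) * ((u x)⁻¹.toReal - (p x)⁻¹.toReal))) *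
      vLpNorm p ((Metric.ball x r).indicator g)

/-- The `ℓ^q` (quasi-)norm of a sequence in `[0,∞]`, with the usual modification for `q = ∞`. -/
def lqNorm (q : ℝ≥0∞) (a : ℕ → ℝ≥0∞) : ℝ≥0∞ :=
  if q = ∞ then ⨆ ν, a ν else (∑' ν, a ν ^ q.toReal) ^ (1 / q.toReal)

/-- The vector-valued Morrey quasi-norm `‖(f_ν)_ν‖_{M^{u(·)}_{p(·)}(ℓ^{q(·)})}`. -/
def morreySeqNorm (p u q : Rn n → ℝ≥0∞) (f : ℕ → Rn n → ℝ≥0∞) : ℝ≥0∞ :=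
  morreyNorm p u (fun x => lqNorm (q x) (fun ν => f ν x))

/-- The kernel `η_{ν,m}(x) = 2^{νn} (1 + 2^ν |x|)^{-m}`. -/
def etaK (ν : ℕ) (m : ℝ) (x : Rn n) : ℝ≥0∞ :=
  ENNReal.ofReal ((2 : ℝ) ^ (ν * n) * (1 + 2 ^ ν * ‖x‖) ^ (-m))

/-- Convolution of `[0,∞]`-valued functions. -/
def lconv (f g : Rn n → ℝ≥0∞) (x : Rn n) : ℝ≥0∞ := ∫⁻ y, f (x - y) * g y

/-- The constant `c_{p,u} = max(0, sup_x (1/p(x) - 1/u(x)) - 1/p_∞)`. -/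
def cpu (p u : Rn n → ℝ≥0∞) (pinvInf : ℝ) : ℝ :=
  max 0 ((⨆ x : Rn n, ((p x)⁻¹.toReal - (u x)⁻¹.toReal)) - pinvInf)

/-- The open cube `Q_r(x₀)` with center `x₀` and sides of length `2r` parallel to the axes. -/
def cubeO (x0 : Rn n) (r : ℝ) : Set (Rn n) := {y : Rn n | ∀ i, |y i - x0 i| < r}

/-- Upper bound for `φ_t(1/L)` when `L` dominates a multiple of `s^{1/t}`. -/
theorem phiVE_inv_le {t : ℝ≥0∞} (ht : 0 < t) {M H s L : ℝ} (hM : t⁻¹.toReal ≤ M) (hH : 1 ≤ H)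
    (hs : 0 < s) (hL : H ^ M * s ^ t⁻¹.toReal ≤ L) :
    phiVE t (1 / ENNReal.ofReal L) ≤ ENNReal.ofReal (H⁻¹ * s⁻¹) := by
  have hH0 : 0 < H := by linarith
  have hL0 : 0 < L := lt_of_lt_of_le (by positivity) hL
  unfold phiVE
  split_ifs with h1 h2
  · exact zero_le
  · exfalso
    apply h2
    subst h1
    have hM0 : 0 ≤ M := le_trans ENNReal.toReal_nonneg hM
    simp only [ENNReal.inv_top, ENNReal.toReal_zero, Real.rpow_zero, mul_one] at hL
    have : 1 ≤ L := le_trans (Real.one_le_rpow hH hM0) hL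
    rw [one_div, ENNReal.inv_le_one, ENNReal.one_le_ofReal]
    exact this
  · have hτ : 0 < t.toReal := ENNReal.toReal_pos ht.ne' h1
    rw [ENNReal.toReal_inv] at hM hL
    set τ := t.toReal with hτd
    have hτM : 1 ≤ M * τ := by
      have := mul_le_mul_of_nonneg_right hM hτ.le
      rwa [inv_mul_cancel₀ hτ.ne'] at this
    rw [one_div, ← ENNReal.ofReal_inv_of_pos hL0,
      ENNReal.ofReal_rpow_of_pos (inv_pos.2 hL0)]
    apply ENNReal.ofReal_le_ofReal
    rw [Real.inv_rpow hL0.le, ← mul_inv]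
    apply inv_anti₀ (by positivity)
    calc H * s ≤ H ^ (M * τ) * s := by
          gcongr
          calc H = H ^ (1 : ℝ) := (Real.rpow_one H).symm
            _ ≤ _ := Real.rpow_le_rpow_of_exponent_le hH hτM
      _ = (H ^ M * s ^ τ⁻¹) ^ τ := by
          rw [Real.mul_rpow (by positivity) (by positivity), ← Real.rpow_mul hH0.le,
            ← Real.rpow_mul hs.le, inv_mul_cancel₀ hτ.ne', Real.rpow_one]
      _ ≤ L ^ τ := Real.rpow_le_rpow (by positivity) hL hτ.le

/-- Lower bound for `φ_t(1/L)` when `L` is below a small multiple of `s^{1/t}`. -/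
theorem le_phiVE_inv {t : ℝ≥0∞} (ht : 0 < t) {M η s : ℝ} (hM : t⁻¹.toReal ≤ M) (hM0 : 0 < M)
    (hη : 0 < η) (hη1 : η < 1) (hs : 0 < s) {L : ℝ≥0∞}
    (hL : L < ENNReal.ofReal (η ^ M * s ^ t⁻¹.toReal)) :
    ENNReal.ofReal (η⁻¹ * s⁻¹) ≤ phiVE t (1 / L) := by
  unfold phiVE
  split_ifs with h1 h2
  · exfalso
    subst h1
    simp only [ENNReal.inv_top, ENNReal.toReal_zero, Real.rpow_zero, mul_one] at hL
    rw [one_div, ENNReal.inv_le_one] at h2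
    have := h2.trans_lt hL
    rw [ENNReal.one_lt_ofReal] at this
    exact absurd this (not_lt.2 (Real.rpow_le_one hη.le hη1.le hM0.le))
  · exact le_top
  · have hτ : 0 < t.toReal := ENNReal.toReal_pos ht.ne' h1
    rw [ENNReal.toReal_inv] at hM hL
    set τ := t.toReal with hτd
    have hτM : 1 ≤ M * τ := by
      have := mul_le_mul_of_nonneg_right hM hτ.le
      rwa [inv_mul_cancel₀ hτ.ne'] at this
    have hpos : 0 < η ^ M * s ^ τ⁻¹ := by positivity
    refine le_trans ?_ (ENNReal.rpow_le_rpow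
      (show ENNReal.ofReal (η ^ M * s ^ τ⁻¹)⁻¹ ≤ 1 / L from ?_) hτ.le)
    · rw [ENNReal.ofReal_rpow_of_pos (inv_pos.2 hpos)]
      apply ENNReal.ofReal_le_ofReal
      rw [Real.inv_rpow hpos.le, ← mul_inv]
      apply inv_anti₀ (by positivity)
      rw [Real.mul_rpow (by positivity) (by positivity), ← Real.rpow_mul hη.le,
        ← Real.rpow_mul hs.le, inv_mul_cancel₀ hτ.ne', Real.rpow_one]
      gcongr
      calc η ^ (M * τ) ≤ η ^ (1 : ℝ) := Real.rpow_le_rpow_of_exponent_ge hη hη1.le hτM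
        _ = η := Real.rpow_one η
    · rw [ENNReal.ofReal_inv_of_pos hpos, one_div]
      exact ENNReal.inv_le_inv.2 hL.le

/-- The modular of a multiple of a characteristic function. -/
theorem modularVE_indicator {p : Rn n → ℝ≥0∞} (hp : ∀ x, 0 < p x) {A : Set (Rn n)}
    (hA : MeasurableSet A) (L : ℝ≥0∞) :
    modularVE p (fun x => A.indicator 1 x / L) = ∫⁻ x in A, phiVE (p x) (1 / L) := by
  unfold modularVE
  rw [← lintegral_indicator hA]
  congr 1
  ext x
  by_cases hx : x ∈ A
  · simp [hx]
  · simp only [hx, not_false_eq_true, Set.indicator_of_notMem, ENNReal.zero_div]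
    unfold phiVE
    split_ifs with h1 h2
    · rfl
    · exact absurd zero_le h2
    · exact ENNReal.zero_rpow_of_pos (ENNReal.toReal_pos (hp x).ne' h1)

theorem vLpNorm_indicator_le {p : Rn n → ℝ≥0∞} (hp : ∀ x, 0 < p x) {A : Set (Rn n)}
    (hA : MeasurableSet A) {M H L : ℝ} (hM : ∀ x, (p x)⁻¹.toReal ≤ M) (hH : 1 ≤ H)
    {s : Rn n → ℝ} (hs : ∀ x, 0 < s x)
    (hL : ∀ x ∈ A, H ^ M * s x ^ (p x)⁻¹.toReal ≤ L)
    (hint : ∫⁻ x in A, ENNReal.ofReal (s x)⁻¹ ≤ ENNReal.ofReal H) :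
    vLpNorm p (A.indicator 1) ≤ ENNReal.ofReal L := by
  have hH0 : 0 < H := by linarith
  apply sInf_le
  rw [Set.mem_ofPred_eq, modularVE_indicator hp hA]
  calc ∫⁻ x in A, phiVE (p x) (1 / ENNReal.ofReal L)
      ≤ ∫⁻ x in A, ENNReal.ofReal H⁻¹ * ENNReal.ofReal (s x)⁻¹ := by
        refine setLIntegral_mono' hA fun x hx => ?_
        rw [← ENNReal.ofReal_mul (by positivity)]
        exact phiVE_inv_le (hp x) (hM x) hH (hs x) (hL x hx)
    _ = ENNReal.ofReal H⁻¹ * ∫⁻ x in A, ENNReal.ofReal (s x)⁻¹ :=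
        lintegral_const_mul' _ _ ENNReal.ofReal_ne_top
    _ ≤ ENNReal.ofReal H⁻¹ * ENNReal.ofReal H := by gcongr
    _ = 1 := by
        rw [← ENNReal.ofReal_mul (by positivity), inv_mul_cancel₀ hH0.ne', ENNReal.ofReal_one]

theorem le_vLpNorm_indicator {p : Rn n → ℝ≥0∞} (hp : ∀ x, 0 < p x) {A B : Set (Rn n)}
    (hA : MeasurableSet A) (hB : MeasurableSet B) (hBA : B ⊆ A) {M a s κ : ℝ}
    (hM : ∀ x, (p x)⁻¹.toReal ≤ M) (hM0 : 0 < M) (ha : 0 < a) (hs : 0 < s)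
    (hvol : ENNReal.ofReal (a * s) ≤ volume B)
    (hκ : ∀ x ∈ B, κ ≤ (a / (1 + 2 * a)) ^ M * s ^ (p x)⁻¹.toReal) :
    ENNReal.ofReal κ ≤ vLpNorm p (A.indicator 1) := by
  have hη : 0 < a / (1 + 2 * a) := by positivity
  have hη1 : a / (1 + 2 * a) < 1 := by rw [div_lt_one (by positivity)]; linarith
  apply le_sInf
  intro L hL
  rw [Set.mem_ofPred_eq, modularVE_indicator hp hA] at hL
  by_contra! hlt
  refine absurd hL (not_le.2 ?_)
  calc (1 : ℝ≥0∞) < ENNReal.ofReal (1 + 2 * a) := by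
        rw [ENNReal.one_lt_ofReal]; linarith
    _ = ENNReal.ofReal ((a / (1 + 2 * a))⁻¹ * s⁻¹) * ENNReal.ofReal (a * s) := by
        rw [← ENNReal.ofReal_mul (by positivity)]
        congr 1
        field_simp
    _ ≤ ENNReal.ofReal ((a / (1 + 2 * a))⁻¹ * s⁻¹) * volume B := by gcongr
    _ = ∫⁻ _ in B, ENNReal.ofReal ((a / (1 + 2 * a))⁻¹ * s⁻¹) := by
        rw [setLIntegral_const]
    _ ≤ ∫⁻ x in B, phiVE (p x) (1 / L) := by
        refine setLIntegral_mono' hB fun x hx => ?_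
        exact le_phiVE_inv (hp x) (hM x) hM0 hη hη1 hs
          (hlt.trans_le (ENNReal.ofReal_le_ofReal (hκ x hx)))
    _ ≤ ∫⁻ x in A, phiVE (p x) (1 / L) := lintegral_mono_set hBA

theorem LocLogHolder.bddAbove {g : Rn n → ℝ} (hg : LocLogHolder g) :
    ∃ M > 0, ∀ x, g x ≤ M := by
  obtain ⟨c, hc, h⟩ := hg
  refine ⟨|g 0| + c, by positivity, fun x => ?_⟩
  have h1 := h x 0
  have h2 : 1 ≤ Real.log (Real.exp 1 + (dist x 0)⁻¹) := by
    rw [Real.le_log_iff_exp_le (by positivity)]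
    have : 0 ≤ (dist x 0)⁻¹ := by positivity
    linarith
  have h3 : c / Real.log (Real.exp 1 + (dist x 0)⁻¹) ≤ c := div_le_self hc.le h2
  have := le_abs_self (g x - g 0)
  have := le_abs_self (g 0)
  linarith

theorem rpow_le_exp_mul_rpow {s a b C : ℝ} (hs : 0 < s) (h : |a - b| * |Real.log s| ≤ C) :
    s ^ a ≤ Real.exp C * s ^ b := by
  rw [Real.rpow_def_of_pos hs, Real.rpow_def_of_pos hs, ← Real.exp_add, Real.exp_le_exp]
  have : Real.log s * (a - b) ≤ |a - b| * |Real.log s| := by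
    rw [← abs_mul, mul_comm]; exact le_abs_self _
  linarith

/-- Local log-Hölder continuity makes `s ^ g x` and `s ^ g y` comparable for `s = r ^ n`,
uniformly in `x`, `y` at distance at most `K * r`. -/
theorem LocLogHolder.exists_mul_log_le {g : Rn n → ℝ} (hg : LocLogHolder g) {K : ℝ} (hK : 1 ≤ K) :
    ∃ C : ℝ, ∀ r : ℝ, 0 < r → r ≤ 1 → ∀ x y : Rn n, dist x y ≤ K * r →
      |g x - g y| * |Real.log (r ^ n)| ≤ C := by
  obtain ⟨c, hc, h⟩ := hg
  refine ⟨c * (n * (Real.log K + 1)), fun r hr hr1 x y hxy => ?_⟩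
  have hlK : 0 ≤ Real.log K := Real.log_nonneg hK
  rcases eq_or_ne x y with rfl | hne
  · simp only [sub_self, abs_zero, zero_mul]; positivity
  have hd : 0 < dist x y := dist_pos.2 hne
  set l := Real.log (Real.exp 1 + (dist x y)⁻¹) with hl
  have h2 : 1 ≤ l := by
    rw [hl, Real.le_log_iff_exp_le (by positivity)]
    have : 0 ≤ (dist x y)⁻¹ := by positivity
    linarith
  have h3 : |Real.log (r ^ n)| ≤ n * (Real.log K + 1) * l := by
    rw [Real.log_pow, abs_mul, Nat.abs_cast, abs_of_nonpos (Real.log_nonpos hr.le hr1), mul_assoc]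
    gcongr
    have : -Real.log r ≤ Real.log K + l := by
      rw [← Real.log_inv, hl, ← Real.log_mul (by positivity) (by positivity)]
      apply Real.log_le_log (by positivity)
      have : r⁻¹ ≤ K * (dist x y)⁻¹ := by
        rw [← div_eq_mul_inv, le_div_iff₀ hd, inv_mul_le_iff₀ hr, mul_comm]
        exact hxy
      have : 0 < K * Real.exp 1 := by positivity
      linarith
    nlinarith
  calc |g x - g y| * |Real.log (r ^ n)| ≤ c / l * (n * (Real.log K + 1) * l) := by
        gcongr
        exact h x y
    _ = c * (n * (Real.log K + 1)) := by
        field_simp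

theorem volume_ball_eq (x : Rn n) {r : ℝ} (hr : 0 < r) :
    volume (Metric.ball x r) =
      ENNReal.ofReal (r ^ n * (volume (Metric.ball (0 : Rn n) 1)).toReal) := by
  rw [Measure.addHaar_ball_of_pos _ _ hr, ENNReal.ofReal_mul (by positivity),
    ENNReal.ofReal_toReal measure_ball_lt_top.ne, finrank_euclideanSpace_fin]

theorem toReal_volume_unitBall_pos : 0 < (volume (Metric.ball (0 : Rn n) 1)).toReal :=
  ENNReal.toReal_pos (Metric.measure_ball_pos _ _ one_pos).ne' measure_ball_lt_top.ne

theorem exists_bounds_of_le_one {p : Rn n → ℝ≥0∞} (hp : ∀ x, 0 < p x)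
    (hg : LocLogHolder (fun x => (p x)⁻¹.toReal)) {K : ℝ} (hK : 1 ≤ K) :
    ∃ c₁ c₂ : ℝ, 0 < c₁ ∧ 0 < c₂ ∧ ∀ (x0 : Rn n) (r : ℝ), 0 < r → r ≤ 1 →
      ∀ A : Set (Rn n), MeasurableSet A → Metric.ball x0 r ⊆ A → A ⊆ Metric.ball x0 (K * r) →
      ∀ x ∈ Metric.ball x0 r,
        ENNReal.ofReal (c₁ * r ^ ((n : ℝ) * (p x)⁻¹.toReal)) ≤ vLpNorm p (A.indicator 1) ∧
        vLpNorm p (A.indicator 1) ≤ ENNReal.ofReal (c₂ * r ^ ((n : ℝ) * (p x)⁻¹.toReal)) := by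
  obtain ⟨M, hM0, hM⟩ := hg.bddAbove
  obtain ⟨C, hC⟩ := hg.exists_mul_log_le (K := 2 * K) (by linarith)
  set V := (volume (Metric.ball (0 : Rn n) 1)).toReal with hV
  have hV0 : 0 < V := toReal_volume_unitBall_pos
  have hK0 : 0 < K := by linarith
  refine ⟨(V / (1 + 2 * V)) ^ M * Real.exp (-C), (K ^ n * V + 1) ^ M * Real.exp C,
    by positivity, by positivity, fun x0 r hr hr1 A hA hBA hAB x hx => ?_⟩
  have hrn : 0 < r ^ n := by positivity
  have hdist : ∀ y ∈ A, dist x y ≤ 2 * K * r := fun y hy => by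
    have h1 := Metric.mem_ball.1 (hAB hy)
    have h2 := Metric.mem_ball.1 hx
    have h3 := dist_triangle_right x y x0
    nlinarith
  simp only [Real.rpow_natCast_mul hr.le]
  constructor
  · refine le_vLpNorm_indicator hp hA measurableSet_ball hBA hM hM0 hV0 hrn ?_ fun y hy => ?_
    · rw [volume_ball_eq _ hr, mul_comm]
    · rw [mul_assoc]
      gcongr
      rw [Real.exp_neg, inv_mul_le_iff₀ (Real.exp_pos C)]
      exact rpow_le_exp_mul_rpow hrn (hC r hr hr1 x y (hdist y (hBA hy)))
  · have hH : 1 ≤ K ^ n * V + 1 := by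
      have : 0 < K ^ n * V := by positivity
      linarith
    refine vLpNorm_indicator_le hp hA hM hH (s := fun _ => r ^ n) (fun _ => hrn)
      (fun y hy => ?_) ?_
    · rw [mul_assoc]
      gcongr
      have := hC r hr hr1 y x (by rw [dist_comm]; exact hdist y hy)
      exact rpow_le_exp_mul_rpow hrn this
    · rw [setLIntegral_const]
      calc ENNReal.ofReal (r ^ n)⁻¹ * volume A
          ≤ ENNReal.ofReal (r ^ n)⁻¹ * volume (Metric.ball x0 (K * r)) := by gcongr
        _ = ENNReal.ofReal (K ^ n * V) := by
            rw [volume_ball_eq _ (by positivity), ← ENNReal.ofReal_mul (by positivity)]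
            congr 1
            rw [mul_pow, ← hV]
            field_simp
        _ ≤ _ := ENNReal.ofReal_le_ofReal (by linarith)

/-- The limit at infinity of a nonnegative function in positive dimension is nonnegative. -/
theorem LogDecay.limit_nonneg {g : Rn n → ℝ} {a c : ℝ} (h : LogDecay g a c) (hn : n ≠ 0)
    (hg : ∀ x, 0 ≤ g x) : 0 ≤ a := by
  by_contra! ha
  have : Nontrivial (Rn n) := by
    have : Nonempty (Fin n) := ⟨⟨0, Nat.pos_of_ne_zero hn⟩⟩
    infer_instance
  obtain ⟨x, hx⟩ := NormedSpace.exists_lt_norm ℝ (Rn n) (Real.exp (c / -a))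
  have hl : c / -a < Real.log (Real.exp 1 + ‖x‖) := by
    rw [Real.lt_log_iff_exp_lt (by positivity)]
    have := Real.exp_pos 1
    linarith
  have hl1 : 1 ≤ Real.log (Real.exp 1 + ‖x‖) := by
    rw [Real.le_log_iff_exp_le (by positivity)]
    have := norm_nonneg x
    linarith
  have h1 := h x
  rw [le_div_iff₀ (by linarith)] at h1
  rw [div_lt_iff₀ (by linarith)] at hl
  have h2 : -a ≤ |g x - a| := le_trans (by have := hg x; linarith) (le_abs_self _)
  nlinarith

/-- Pointwise comparison behind the upper bound for large radii. -/
theorem LogDecay.min_rpow_le {g : Rn n → ℝ} {a c m s : ℝ} (h : LogDecay g a c) (hc : 0 ≤ c)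
    (ha : 0 ≤ a) (hg : ∀ x, 0 ≤ g x) (hm : 0 ≤ m) (hs : 1 ≤ s) (x : Rn n) :
    min s ((1 + ‖x‖) ^ m) ^ g x ≤ Real.exp (m * c) * s ^ a := by
  have hs0 : 0 < s := by linarith
  have ht : 0 < 1 + ‖x‖ := by positivity
  have hmin : 0 < min s ((1 + ‖x‖) ^ m) := lt_min hs0 (by positivity)
  have hE : 1 ≤ Real.exp (m * c) := Real.one_le_exp (by positivity)
  rcases le_total (g x) a with hga | hga
  · calc min s ((1 + ‖x‖) ^ m) ^ g x ≤ s ^ g x :=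
          Real.rpow_le_rpow hmin.le (min_le_left _ _) (hg x)
      _ ≤ s ^ a := Real.rpow_le_rpow_of_exponent_le hs hga
      _ ≤ _ := le_mul_of_one_le_left (by positivity) hE
  · have hδ : 0 ≤ g x - a := by linarith
    have hl1 : 1 ≤ Real.log (Real.exp 1 + ‖x‖) := by
      rw [Real.le_log_iff_exp_le (by positivity)]
      have := norm_nonneg x
      linarith
    have hbound : Real.log (1 + ‖x‖) * (g x - a) ≤ c := by
      have h1 := h x
      rw [abs_of_nonneg hδ, le_div_iff₀ (by linarith)] at h1
      have : Real.log (1 + ‖x‖) ≤ Real.log (Real.exp 1 + ‖x‖) := by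
        apply Real.log_le_log ht
        have := Real.one_le_exp (zero_le_one (α := ℝ))
        linarith
      nlinarith
    calc min s ((1 + ‖x‖) ^ m) ^ g x
        = min s ((1 + ‖x‖) ^ m) ^ (g x - a) * min s ((1 + ‖x‖) ^ m) ^ a := by
          rw [← Real.rpow_add hmin]; ring_nf
      _ ≤ ((1 + ‖x‖) ^ m) ^ (g x - a) * s ^ a := by
          gcongr
          · exact min_le_right _ _
          · exact min_le_left _ _
      _ ≤ Real.exp (m * c) * s ^ a := by
          gcongr
          rw [← Real.rpow_mul ht.le, Real.rpow_def_of_pos ht, Real.exp_le_exp]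
          nlinarith

theorem LogDecay.mul_log_le {g : Rn n → ℝ} {a c : ℝ} (h : LogDecay g a c) (hc : 0 ≤ c)
    {r : ℝ} (hr : 1 ≤ r) {x : Rn n} (hx : r / 2 ≤ ‖x‖) :
    |a - g x| * |Real.log (r ^ n)| ≤ c * (n * 2) := by
  set l := Real.log (Real.exp 1 + ‖x‖) with hl
  have hl1 : 1 ≤ l := by
    rw [hl, Real.le_log_iff_exp_le (by positivity)]
    have := norm_nonneg x
    linarith
  have h3 : |Real.log (r ^ n)| ≤ n * 2 * l := by
    rw [Real.log_pow, abs_mul, Nat.abs_cast, abs_of_nonneg (Real.log_nonneg hr), mul_assoc]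
    gcongr
    have h4 : Real.log r ≤ Real.log 2 + l := by
      rw [hl, ← Real.log_mul (by positivity) (by positivity)]
      apply Real.log_le_log (by positivity)
      have := Real.exp_pos 1
      linarith
    have := Real.log_two_lt_d9
    linarith
  calc |a - g x| * |Real.log (r ^ n)| ≤ c / l * (n * 2 * l) := by
        gcongr
        rw [abs_sub_comm]
        exact h x
    _ = c * (n * 2) := by field_simp

theorem exists_bounds_of_one_le {p : Rn n → ℝ≥0∞} (hp : ∀ x, 0 < p x) (hn : n ≠ 0)
    (hg : LocLogHolder (fun x => (p x)⁻¹.toReal)) {a c : ℝ} (hc : 0 < c)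
    (hd : LogDecay (fun x => (p x)⁻¹.toReal) a c) {K : ℝ} (hK : 1 ≤ K) :
    ∃ c₁ c₂ : ℝ, 0 < c₁ ∧ 0 < c₂ ∧ ∀ (x0 : Rn n) (r : ℝ), 1 ≤ r →
      ∀ A : Set (Rn n), MeasurableSet A → Metric.ball x0 r ⊆ A → A ⊆ Metric.ball x0 (K * r) →
        ENNReal.ofReal (c₁ * r ^ ((n : ℝ) * a)) ≤ vLpNorm p (A.indicator 1) ∧
        vLpNorm p (A.indicator 1) ≤ ENNReal.ofReal (c₂ * r ^ ((n : ℝ) * a)) := by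
  obtain ⟨M, hM0, hM⟩ := hg.bddAbove
  have ha : 0 ≤ a := hd.limit_nonneg hn fun _ => ENNReal.toReal_nonneg
  set V := (volume (Metric.ball (0 : Rn n) 1)).toReal with hV
  have hV0 : 0 < V := toReal_volume_unitBall_pos
  have hK0 : 0 < K := by linarith
  set m : ℝ := n + 1 with hm
  have hm0 : 0 ≤ m := by positivity
  have hfin : ∫⁻ x : Rn n, ENNReal.ofReal ((1 + ‖x‖) ^ (-m)) < ∞ := by
    apply finite_integral_one_add_norm
    rw [finrank_euclideanSpace_fin, hm]
    linarith
  set I := (∫⁻ x : Rn n, ENNReal.ofReal ((1 + ‖x‖) ^ (-m))).toReal with hI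
  have hI0 : 0 ≤ I := ENNReal.toReal_nonneg
  refine ⟨(V / 2 / (1 + 2 * (V / 2))) ^ M * Real.exp (-(c * (n * 2))),
    (K ^ n * V + I + 1) ^ M * Real.exp (m * c),
    by positivity, by positivity, fun x0 r hr A hA hBA hAB => ?_⟩
  have hr0 : 0 < r := by linarith
  have hrn : 0 < r ^ n := by positivity
  have hrn1 : 1 ≤ r ^ n := one_le_pow₀ hr
  simp only [Real.rpow_natCast_mul hr0.le]
  constructor
  · refine le_vLpNorm_indicator hp hA (B := Metric.ball x0 r \ Metric.ball 0 (r / 2))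
      (measurableSet_ball.diff measurableSet_ball) (Set.sdiff_subset.trans hBA) hM hM0
      (half_pos hV0) hrn ?_ fun y hy => ?_
    · refine le_trans ?_ le_measure_sdiff
      rw [volume_ball_eq _ hr0, volume_ball_eq _ (half_pos hr0),
        ← ENNReal.ofReal_sub _ (by positivity)]
      apply ENNReal.ofReal_le_ofReal
      have h2 : (2 : ℝ) ≤ 2 ^ n := by
        calc (2 : ℝ) = 2 ^ 1 := (pow_one 2).symm
          _ ≤ 2 ^ n := pow_le_pow_right₀ (by norm_num) (Nat.one_le_iff_ne_zero.2 hn)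
      have h3 : (r / 2) ^ n ≤ r ^ n / 2 := by
        rw [div_pow]
        gcongr
      nlinarith
    · rw [mul_assoc]
      gcongr
      rw [Real.exp_neg, inv_mul_le_iff₀ (Real.exp_pos _)]
      refine rpow_le_exp_mul_rpow hrn (hd.mul_log_le hc.le hr ?_)
      have := hy.2
      rw [mem_ball_zero_iff] at this
      exact not_lt.1 this
  · have hH : 1 ≤ K ^ n * V + I + 1 := by
      have : 0 < K ^ n * V := by positivity
      linarith
    have ht : ∀ x : Rn n, 0 < (1 + ‖x‖) ^ m := fun x => by positivity
    refine vLpNorm_indicator_le hp hA hM hH (s := fun x => min (r ^ n) ((1 + ‖x‖) ^ m))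
      (fun x => lt_min hrn (ht x)) (fun y hy => ?_) ?_
    · rw [mul_assoc]
      gcongr
      exact hd.min_rpow_le hc.le ha (fun _ => ENNReal.toReal_nonneg) hm0 hrn1 y
    · calc ∫⁻ x in A, ENNReal.ofReal (min (r ^ n) ((1 + ‖x‖) ^ m))⁻¹
          ≤ ∫⁻ x in A, (ENNReal.ofReal (r ^ n)⁻¹ + ENNReal.ofReal ((1 + ‖x‖) ^ (-m))) := by
            refine lintegral_mono fun x => ?_
            rw [← ENNReal.ofReal_add (by positivity) (by positivity)]
            apply ENNReal.ofReal_le_ofReal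
            rw [Real.rpow_neg (by positivity)]
            have h1 := inv_pos.2 hrn
            have h2 := inv_pos.2 (ht x)
            rcases min_choice (r ^ n) ((1 + ‖x‖) ^ m) with h | h <;> rw [h] <;> linarith
        _ = ENNReal.ofReal (r ^ n)⁻¹ * volume A +
              ∫⁻ x in A, ENNReal.ofReal ((1 + ‖x‖) ^ (-m)) := by
            rw [lintegral_add_left measurable_const, setLIntegral_const]
        _ ≤ ENNReal.ofReal (r ^ n)⁻¹ * volume (Metric.ball x0 (K * r)) +
              ∫⁻ x : Rn n, ENNReal.ofReal ((1 + ‖x‖) ^ (-m)) := by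
            gcongr
            exact Measure.restrict_le_self
        _ = ENNReal.ofReal (K ^ n * V) + ENNReal.ofReal I := by
            congr 1
            · rw [volume_ball_eq _ (by positivity), ← ENNReal.ofReal_mul (by positivity)]
              congr 1
              rw [mul_pow, ← hV]
              field_simp
            · rw [hI, ENNReal.ofReal_toReal hfin.ne]
        _ ≤ _ := by
            rw [← ENNReal.ofReal_add (by positivity) hI0]
            exact ENNReal.ofReal_le_ofReal (by linarith)

theorem measurableSet_cubeO (x0 : Rn n) (r : ℝ) : MeasurableSet (cubeO x0 r) := by
  have : cubeO x0 r = ⋂ i, {y : Rn n | |y i - x0 i| < r} := by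
    ext y; simp [cubeO]
  rw [this]
  exact MeasurableSet.iInter fun i =>
    (isOpen_lt (by fun_prop) continuous_const).measurableSet

theorem ball_subset_cubeO (x0 : Rn n) (r : ℝ) : Metric.ball x0 r ⊆ cubeO x0 r := by
  intro y hy i
  rw [mem_ball_iff_norm] at hy
  have := PiLp.norm_apply_le (y - x0) i
  rw [PiLp.sub_apply, Real.norm_eq_abs] at this
  exact this.trans_lt hy

theorem cubeO_subset_ball (x0 : Rn n) {r : ℝ} (hr : 0 < r) :
    cubeO x0 r ⊆ Metric.ball x0 ((n + 1) * r) := by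
  intro y hy
  rw [mem_ball_iff_norm, EuclideanSpace.norm_eq, Real.sqrt_lt' (by positivity)]
  calc ∑ i, ‖(y - x0) i‖ ^ 2 ≤ ∑ _i : Fin n, r ^ 2 := by
        refine Finset.sum_le_sum fun i _ => ?_
        have := hy i
        rw [PiLp.sub_apply, Real.norm_eq_abs]
        gcongr
    _ = n * r ^ 2 := by simp
    _ < ((n + 1) * r) ^ 2 := by
        have : (0 : ℝ) ≤ n := by positivity
        have : 0 < r ^ 2 := by positivity
        nlinarith [mul_nonneg ‹(0 : ℝ) ≤ n› this.le, mul_nonneg (sq_nonneg (n : ℝ)) this.le]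

/-- norms of characteristic functions of balls and cubes in variable
exponent Lebesgue spaces. -/
theorem statement0 (n : ℕ) (p : Rn n → ℝ≥0∞) (pinvInf : ℝ)
    (hp : IsPLogWith p pinvInf) :
    ∃ c₁ c₂ : ℝ, 0 < c₁ ∧ 0 < c₂ ∧
      ∀ (x0 : Rn n) (r : ℝ), 0 < r →
        ((r ≤ 1 → ∀ x ∈ Metric.ball x0 r,
          (ENNReal.ofReal (c₁ * r ^ ((n : ℝ) * (p x)⁻¹.toReal)) ≤
              vLpNorm p ((Metric.ball x0 r).indicator 1) ∧
            vLpNorm p ((Metric.ball x0 r).indicator 1) ≤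
              ENNReal.ofReal (c₂ * r ^ ((n : ℝ) * (p x)⁻¹.toReal))) ∧
          (ENNReal.ofReal (c₁ * r ^ ((n : ℝ) * (p x)⁻¹.toReal)) ≤
              vLpNorm p ((cubeO x0 r).indicator 1) ∧
            vLpNorm p ((cubeO x0 r).indicator 1) ≤
              ENNReal.ofReal (c₂ * r ^ ((n : ℝ) * (p x)⁻¹.toReal)))) ∧
        (1 ≤ r →
          (ENNReal.ofReal (c₁ * r ^ ((n : ℝ) * pinvInf)) ≤
              vLpNorm p ((Metric.ball x0 r).indicator 1) ∧
            vLpNorm p ((Metric.ball x0 r).indicator 1) ≤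
              ENNReal.ofReal (c₂ * r ^ ((n : ℝ) * pinvInf))) ∧
          (ENNReal.ofReal (c₁ * r ^ ((n : ℝ) * pinvInf)) ≤
              vLpNorm p ((cubeO x0 r).indicator 1) ∧
            vLpNorm p ((cubeO x0 r).indicator 1) ≤
              ENNReal.ofReal (c₂ * r ^ ((n : ℝ) * pinvInf))))) := by
  obtain ⟨⟨-, hpos, -⟩, hg, c, hc, hd⟩ := hp
  have hK : (1 : ℝ) ≤ n + 1 := by
    have : (0 : ℝ) ≤ n := by positivity
    linarith
  obtain ⟨a₁, a₂, ha₁, ha₂, hsmall⟩ := exists_bounds_of_le_one hpos hg hK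
  have hlarge : ∃ b₁ b₂ : ℝ, 0 < b₁ ∧ 0 < b₂ ∧ ∀ (x0 : Rn n) (r : ℝ), 1 ≤ r →
      ∀ A : Set (Rn n), MeasurableSet A → Metric.ball x0 r ⊆ A →
      A ⊆ Metric.ball x0 ((n + 1) * r) →
        ENNReal.ofReal (b₁ * r ^ ((n : ℝ) * pinvInf)) ≤ vLpNorm p (A.indicator 1) ∧
        vLpNorm p (A.indicator 1) ≤ ENNReal.ofReal (b₂ * r ^ ((n : ℝ) * pinvInf)) := by
    rcases eq_or_ne n 0 with rfl | hn
    · refine ⟨a₁, a₂, ha₁, ha₂, fun x0 r hr A hA hBA _ => ?_⟩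
      have hsub : ∀ y : Rn 0, y ∈ Metric.ball x0 1 := fun y => by
        rw [Subsingleton.elim y x0]; exact Metric.mem_ball_self one_pos
      have h := hsmall x0 1 one_pos le_rfl A hA ((Metric.ball_subset_ball hr).trans hBA)
        (fun y _ => Metric.ball_subset_ball (by norm_num) (hsub y)) x0 (hsub x0)
      simpa using h
    · exact exists_bounds_of_one_le hpos hn hg hc hd hK
  obtain ⟨b₁, b₂, hb₁, hb₂, hlarge⟩ := hlarge
  have hshrink : ∀ {u v w : ℝ} {N : ℝ≥0∞}, u ≤ v → 0 ≤ w → ENNReal.ofReal (v * w) ≤ N →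
      ENNReal.ofReal (u * w) ≤ N := fun huv hw h =>
    (ENNReal.ofReal_le_ofReal (mul_le_mul_of_nonneg_right huv hw)).trans h
  have hgrow : ∀ {u v w : ℝ} {N : ℝ≥0∞}, u ≤ v → 0 ≤ w → N ≤ ENNReal.ofReal (u * w) →
      N ≤ ENNReal.ofReal (v * w) := fun huv hw h =>
    h.trans (ENNReal.ofReal_le_ofReal (mul_le_mul_of_nonneg_right huv hw))
  refine ⟨min a₁ b₁, max a₂ b₂, lt_min ha₁ hb₁, lt_max_of_lt_left ha₂, fun x0 r hr => ?_⟩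
  have hball : Metric.ball x0 r ⊆ Metric.ball x0 ((n + 1) * r) :=
    Metric.ball_subset_ball (by nlinarith)
  refine ⟨fun hr1 x hx => ?_, fun hr1 => ?_⟩
  · have hw : 0 ≤ r ^ ((n : ℝ) * (p x)⁻¹.toReal) := by positivity
    obtain ⟨h1, h2⟩ := hsmall x0 r hr hr1 _ measurableSet_ball subset_rfl hball x hx
    obtain ⟨h3, h4⟩ := hsmall x0 r hr hr1 _ (measurableSet_cubeO x0 r) (ball_subset_cubeO x0 r)
      (cubeO_subset_ball x0 hr) x hx
    exact ⟨⟨hshrink (min_le_left _ _) hw h1, hgrow (le_max_left _ _) hw h2⟩,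
      ⟨hshrink (min_le_left _ _) hw h3, hgrow (le_max_left _ _) hw h4⟩⟩
  · have hw : 0 ≤ r ^ ((n : ℝ) * pinvInf) := by positivity
    obtain ⟨h1, h2⟩ := hlarge x0 r hr1 _ measurableSet_ball subset_rfl hball
    obtain ⟨h3, h4⟩ := hlarge x0 r hr1 _ (measurableSet_cubeO x0 r) (ball_subset_cubeO x0 r)
      (cubeO_subset_ball x0 hr)
    exact ⟨⟨hshrink (min_le_right _ _) hw h1, hgrow (le_max_right _ _) hw h2⟩,
      ⟨hshrink (min_le_right _ _) hw h3, hgrow (le_max_right _ _) hw h4⟩⟩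

end
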